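/- Let 0 < θ < 1, let 1 ≤ q₀, q₁ < ∞ be constants, let p₀ be a globally log-Hölder continuous exponent with 1 ≤ p₀⁻ ≤ p₀⁺ < ∞, and let α₀, α₁ : ℝ^n → ℝ be locally log-Hölder continuous. Define 1/p(·) := (1−θ)/p₀(·), 1/q := (1−θ)/q₀ + θ/q₁, and α(·) := (1−θ)α₀(·) + θα₁(·). Then there exists a constant C > 0 such that for every complex sequence λ with 0 < ‖λ‖_{f^{α(·)}_{p(·),q}} < ∞ there exist nonnegative sequences λ⁰, λ¹ indexed by ℕ₀ × ℤ^n with |λ_{j,m}| ≤ ‖λ‖_{f^{α(·)}_{p(·),q}} (λ⁰_{j,m})^{1−θ} (λ¹_{j,m})^{θ} for all j ∈ ℕ₀ and m ∈ ℤ^n, and ‖λ⁰‖_{f^{α₀(·)}_{p₀(·),q₀}} ≤ C and ‖λ¹‖_{f^{α₁(·)}_{∞,q₁}} ≤ C. -/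

import Mathlib

open MeasureTheory ENNReal Real Set

noncomputable section

/-- Euclidean space ℝ^n. -/
abbrev En (n : ℕ) := EuclideanSpace ℝ (Fin n)

/-- `g` is locally log-Hölder continuous with constant `c`. -/
def LocLogHolder {n : ℕ} (c : ℝ) (g : En n → ℝ) : Prop :=
  0 < c ∧ ∀ x y : En n, |g x - g y| ≤ c / Real.log (Real.exp 1 + 1 / ‖x - y‖)

/-- `g` is globally log-Hölder continuous with local constant `c`. -/
def GlobLogHolder {n : ℕ} (c : ℝ) (g : En n → ℝ) : Prop :=
  LocLogHolder c g ∧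
    ∃ (gi cd : ℝ), 0 < cd ∧ ∀ x : En n, |g x - gi| ≤ cd / Real.log (Real.exp 1 + ‖x‖)

/-- The kernel η_{v,h}(x) = 2^{nv} (1 + 2^v |x|)^{-h}. -/
def eta (n : ℕ) (v : ℕ) (h : ℝ) (x : En n) : ℝ :=
  (2 : ℝ) ^ (n * v) * (1 + (2 : ℝ) ^ v * ‖x‖) ^ (-h)

/-- The dyadic cube Q_{v,m}. -/
def dyadicCube (n : ℕ) (v : ℤ) (m : Fin n → ℤ) : Set (En n) :=
  {x | ∀ i, (m i : ℝ) ≤ (2 : ℝ) ^ v * x i ∧ (2 : ℝ) ^ v * x i < m i + 1}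

/-- Luxemburg (quasi-)norm of an ℝ≥0∞-valued function with variable exponent `p`. -/
def luxNorm {n : ℕ} (p : En n → ℝ) (F : En n → ℝ≥0∞) : ℝ≥0∞ :=
  sInf {c : ℝ≥0∞ | 0 < c ∧ ∫⁻ x, (F x / c) ^ p x ≤ 1}

/-- The mixed Lebesgue-sequence space norm ‖(F_v)_v‖_{L^{p(·)}(ℓ_{q(·)})}. -/
def mixedNorm {n : ℕ} (p q : En n → ℝ) (F : ℕ → En n → ℝ≥0∞) : ℝ≥0∞ :=
  luxNorm p fun x => (∑' v : ℕ, F v x ^ q x) ^ (1 / q x)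

/-- The sequence space norm ‖λ‖_{f^{α(·)}_{p(·),q(·)}}. -/
def seqNorm {n : ℕ} (α p q : En n → ℝ) (lam : ℕ → (Fin n → ℤ) → ℂ) : ℝ≥0∞ :=
  mixedNorm p q fun v x =>
    ∑' m : Fin n → ℤ,
      ENNReal.ofReal ((2 : ℝ) ^ ((v : ℝ) * (α x + n / 2)) * ‖lam v m‖) *
        (dyadicCube n (v : ℤ) m).indicator (fun _ => (1 : ℝ≥0∞)) x

/-- The sequence space norm ‖λ‖_{f^{α(·)}_{∞,q}}. -/
def seqNormInf {n : ℕ} (α : En n → ℝ) (q : ℝ) (lam : ℕ → (Fin n → ℤ) → ℂ) : ℝ≥0∞ :=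
  ⨆ (vQ : ℤ) (mQ : Fin n → ℤ),
    volume (dyadicCube n vQ mQ) ^ (-(1 / q)) *
      (∑' v : ℕ, if vQ ≤ (v : ℤ) then
          ∫⁻ x in dyadicCube n vQ mQ,
            ∑' m : Fin n → ℤ,
              ENNReal.ofReal ((2 : ℝ) ^ ((v : ℝ) * (α x + n / 2) * q) * ‖lam v m‖ ^ q) *
                (dyadicCube n (v : ℤ) m).indicator (fun _ => (1 : ℝ≥0∞)) x
        else 0) ^ (1 / q)

/-- The Calderón product (quasi-)norm associated to two sequence space norms. -/
def calderonNorm {n : ℕ} (N0 N1 : (ℕ → (Fin n → ℤ) → ℂ) → ℝ≥0∞) (θ : ℝ)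
    (lam : ℕ → (Fin n → ℤ) → ℂ) : ℝ≥0∞ :=
  sInf {M : ℝ≥0∞ | ∃ μ ν : ℕ → (Fin n → ℤ) → ℂ, N0 μ ≤ 1 ∧ N1 ν ≤ 1 ∧
    ∀ v m, ENNReal.ofReal ‖lam v m‖ ≤
      M * ENNReal.ofReal ‖μ v m‖ ^ (1 - θ) * ENNReal.ofReal ‖ν v m‖ ^ θ}


/-! ### Basic facts on dyadic cubes -/

def idx (n : ℕ) (v : ℤ) (x : En n) : Fin n → ℤ := fun i => ⌊(2 : ℝ) ^ v * x i⌋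

lemma mem_cube {n : ℕ} {v : ℤ} {m : Fin n → ℤ} {x : En n} :
    x ∈ dyadicCube n v m ↔ idx n v x = m := by
  simp only [dyadicCube, Set.mem_ofPred_eq, idx, funext_iff, Int.floor_eq_iff]

lemma cube_eq {n : ℕ} {v : ℤ} {m : Fin n → ℤ} :
    dyadicCube n v m = idx n v ⁻¹' {m} := by
  ext x; simp [mem_cube]

lemma measurable_idx (n : ℕ) (v : ℤ) : Measurable (idx n v) := by
  refine measurable_pi_iff.2 fun i => ?_
  refine Int.measurable_floor.comp ?_
  fun_prop

lemma measurable_cube {n : ℕ} (v : ℤ) (m : Fin n → ℤ) :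
    MeasurableSet (dyadicCube n v m) := by
  rw [cube_eq]; exact measurable_idx n v (measurableSet_singleton m)

lemma tsum_ind {n : ℕ} (v : ℤ) (f : (Fin n → ℤ) → ℝ≥0∞) (x : En n) :
    ∑' m : Fin n → ℤ, f m * (dyadicCube n v m).indicator (fun _ => (1 : ℝ≥0∞)) x
      = f (idx n v x) := by
  rw [tsum_eq_single (idx n v x)]
  · rw [Set.indicator_of_mem (mem_cube.2 rfl), mul_one]
  · intro m hm
    rw [Set.indicator_of_notMem, mul_zero]
    intro h
    exact hm (mem_cube.1 h).symm

lemma idx_nested {n : ℕ} {u v : ℤ} (huv : u ≤ v) {x y : En n}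
    (h : idx n v x = idx n v y) : idx n u x = idx n u y := by
  obtain ⟨k, rfl⟩ := Int.le.dest huv
  have key : ∀ (z : En n) (i : Fin n) (a : ℤ),
      a ≤ ⌊(2 : ℝ) ^ u * z i⌋ ↔ a * 2 ^ k ≤ ⌊(2 : ℝ) ^ (u + (k : ℤ)) * z i⌋ := by
    intro z i a
    rw [Int.le_floor, Int.le_floor, zpow_add₀ (by norm_num)]
    push_cast
    rw [zpow_natCast, mul_right_comm]
    exact (mul_le_mul_iff_left₀ (by positivity)).symm
  funext i
  have hi := congrFun h i
  simp only [idx] at hi ⊢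
  apply le_antisymm
  · rw [key, ← hi, ← key]
  · rw [key, hi, ← key]

lemma vol_cube {n : ℕ} (v : ℤ) (m : Fin n → ℤ) :
    volume (dyadicCube n v m) = ENNReal.ofReal ((2 : ℝ) ^ (-v)) ^ n := by
  have h2 : (0 : ℝ) < (2 : ℝ) ^ v := by positivity
  have : dyadicCube n v m = (MeasurableEquiv.toLp 2 (Fin n → ℝ)).symm ⁻¹'
      (Set.pi Set.univ fun i => Set.Ico ((m i : ℝ) / 2 ^ v) (((m i : ℝ) + 1) / 2 ^ v)) := by
    ext x
    simp only [dyadicCube, Set.mem_ofPred_eq, Set.mem_preimage, Set.mem_pi, Set.mem_univ,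
      forall_true_left, Set.mem_Ico, div_le_iff₀ h2, lt_div_iff₀ h2]
    refine forall_congr' fun i => ?_
    rw [mul_comm]; rfl
  rw [this, (EuclideanSpace.volume_preserving_symm_measurableEquiv_toLp (Fin n)).measure_preimage
    (MeasurableSet.univ_pi fun i => measurableSet_Ico).nullMeasurableSet, Real.volume_pi_Ico]
  have : ∀ i : Fin n, ((m i : ℝ) + 1) / 2 ^ v - (m i : ℝ) / 2 ^ v = (2 : ℝ) ^ (-v) := by
    intro i; rw [zpow_neg]; field_simp; ring
  simp [this]

lemma vol_cube_ne_zero {n : ℕ} (v : ℤ) (m : Fin n → ℤ) :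
    volume (dyadicCube n v m) ≠ 0 := by
  rw [vol_cube]
  refine pow_ne_zero _ ?_
  rw [Ne, ENNReal.ofReal_eq_zero, not_le]
  positivity

lemma vol_cube_ne_top {n : ℕ} (v : ℤ) (m : Fin n → ℤ) :
    volume (dyadicCube n v m) ≠ ∞ := by
  rw [vol_cube]
  exact ENNReal.pow_ne_top ENNReal.ofReal_ne_top

lemma norm_sub_le_of_idx {n : ℕ} {v : ℤ} {x y : En n} (h : idx n v x = idx n v y) :
    ‖x - y‖ ≤ (n + 1) * (2 : ℝ) ^ (-v) := by
  have h2 : (0 : ℝ) < (2 : ℝ) ^ v := by positivity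
  have hc : ∀ i, ‖(x - y) i‖ ^ 2 ≤ ((2 : ℝ) ^ (-v)) ^ 2 := by
    intro i
    have h1 := Int.abs_sub_lt_one_of_floor_eq_floor (congrFun h i)
    rw [← mul_sub, abs_mul, abs_of_pos h2] at h1
    have : ‖(x - y) i‖ ≤ (2 : ℝ) ^ (-v) := by
      rw [zpow_neg, Real.norm_eq_abs, PiLp.sub_apply, ← one_div, le_div_iff₀ h2, mul_comm]
      exact h1.le
    gcongr
  rw [EuclideanSpace.norm_eq]
  apply Real.sqrt_le_iff.2
  constructor
  · positivity
  calc ∑ i, ‖(x - y) i‖ ^ 2 ≤ ∑ i : Fin n, ((2 : ℝ) ^ (-v)) ^ 2 := Finset.sum_le_sum fun i _ => hc i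
    _ = n * ((2 : ℝ) ^ (-v)) ^ 2 := by simp
    _ ≤ (n + 1) ^ 2 * ((2 : ℝ) ^ (-v)) ^ 2 := by
        gcongr
        nlinarith [(Nat.cast_nonneg n : (0 : ℝ) ≤ n)]
    _ = _ := by ring

def xpt (n : ℕ) (v : ℤ) (m : Fin n → ℤ) : En n :=
  WithLp.toLp 2 (fun i => (2 : ℝ) ^ (-v) * m i)

lemma idx_xpt {n : ℕ} (v : ℤ) (m : Fin n → ℤ) : idx n v (xpt n v m) = m := by
  funext i
  simp only [idx, xpt]
  rw [← mul_assoc, ← zpow_add₀ (by norm_num)]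
  simp

/-! ### log-Hölder continuity -/

lemma one_le_log_e {t : ℝ} (ht : 0 ≤ t) : 1 ≤ Real.log (Real.exp 1 + t) := by
  rw [Real.le_log_iff_exp_le (by positivity)]; linarith

lemma loc_bound {n : ℕ} {c : ℝ} {g : En n → ℝ} (hg : LocLogHolder c g) :
    ∃ K : ℝ, 0 ≤ K ∧ ∀ (v : ℕ) (x y : En n), idx n v x = idx n v y → v * |g x - g y| ≤ K := by
  obtain ⟨hc, hg⟩ := hg
  have hD : (0 : ℝ) ≤ Real.log (n + 1) := Real.log_nonneg (by linarith [(Nat.cast_nonneg n : (0 : ℝ) ≤ n)])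
  have hl2 : 0 < Real.log 2 := Real.log_pos (by norm_num)
  refine ⟨c * (1 + Real.log (n + 1)) / Real.log 2, by positivity, fun v x y h => ?_⟩
  by_cases hxy : x = y
  · subst hxy; simp; positivity
  have hpos : 0 < ‖x - y‖ := norm_pos_iff.2 (sub_ne_zero.2 hxy)
  have hn := norm_sub_le_of_idx h
  have hL := one_le_log_e (t := 1 / ‖x - y‖) (by positivity)
  have h1 : (v : ℝ) * Real.log 2 ≤ (1 + Real.log (n + 1)) * Real.log (Real.exp 1 + 1 / ‖x - y‖) := by
    have h3 : (2 : ℝ) ^ v ≤ (n + 1) * (Real.exp 1 + 1 / ‖x - y‖) := by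
      rw [zpow_neg, zpow_natCast, ← div_eq_mul_inv, le_div_iff₀ (by positivity)] at hn
      have : (2 : ℝ) ^ v ≤ (n + 1) * (1 / ‖x - y‖) := by
        rw [mul_one_div, le_div_iff₀ hpos]; linarith
      refine this.trans ?_
      gcongr
      linarith [Real.exp_pos 1]
    have h4 := Real.log_le_log (by positivity) h3
    rw [Real.log_pow, Real.log_mul (by positivity) (by positivity)] at h4
    nlinarith
  have h2 := hg x y
  rw [le_div_iff₀ (by positivity)] at h2 
  rw [le_div_iff₀ hl2]
  calc v * |g x - g y| * Real.log 2 = (v * Real.log 2) * |g x - g y| := by ring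
    _ ≤ ((1 + Real.log (n + 1)) * Real.log (Real.exp 1 + 1 / ‖x - y‖)) * |g x - g y| := by gcongr
    _ = (1 + Real.log (n + 1)) * (|g x - g y| * Real.log (Real.exp 1 + 1 / ‖x - y‖)) := by ring
    _ ≤ (1 + Real.log (n + 1)) * c := by gcongr
    _ = _ := by ring

lemma log_norm_comp {n : ℕ} {v : ℕ} {x y : En n} (h : idx n v x = idx n v y) :
    Real.log (Real.exp 1 + ‖x‖) ≤ (1 + Real.log (n + 2)) * Real.log (Real.exp 1 + ‖y‖) := by
  have hn0 : (0 : ℝ) ≤ n := Nat.cast_nonneg n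
  have hD : (0 : ℝ) ≤ Real.log (n + 2) := Real.log_nonneg (by linarith)
  have hL := one_le_log_e (norm_nonneg y)
  have hn := norm_sub_le_of_idx h
  have h2 : (2 : ℝ) ^ (-(v : ℤ)) ≤ 1 := zpow_le_one_of_nonpos₀ (by norm_num) (by simp)
  have hn' : ‖x - y‖ ≤ n + 1 := hn.trans (by nlinarith)
  have h3 : ‖x‖ ≤ ‖y‖ + (n + 1) := by
    have := norm_sub_norm_le x y; linarith
  have he : (1 : ℝ) ≤ Real.exp 1 := Real.one_le_exp (by norm_num)
  have h4 : Real.exp 1 + ‖x‖ ≤ (n + 2) * (Real.exp 1 + ‖y‖) := by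
    nlinarith [norm_nonneg y]
  have h5 := Real.log_le_log (by positivity) h4
  rw [Real.log_mul (by positivity) (by positivity)] at h5
  nlinarith

lemma glob_bound {n : ℕ} {c : ℝ} {g : En n → ℝ} (hg : GlobLogHolder c g) :
    ∃ K : ℝ, 0 ≤ K ∧ ∀ (v : ℕ) (x y z : En n), idx n v x = idx n v z → idx n v y = idx n v z →
      Real.log (Real.exp 1 + ‖z‖) * |g x - g y| ≤ K := by
  obtain ⟨-, gi, cd, hcd, hg⟩ := hg
  have hn0 : (0 : ℝ) ≤ n := Nat.cast_nonneg n
  have hD : (0 : ℝ) ≤ Real.log (n + 2) := Real.log_nonneg (by linarith)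
  have key : ∀ (v : ℕ) (x z : En n), idx n v x = idx n v z →
      Real.log (Real.exp 1 + ‖z‖) * |g x - gi| ≤ (1 + Real.log (n + 2)) * cd := by
    intro v x z h
    have h1 := log_norm_comp h.symm
    have hL := one_le_log_e (norm_nonneg x)
    have h2 := hg x
    rw [le_div_iff₀ (by positivity)] at h2
    calc _ ≤ ((1 + Real.log (n + 2)) * Real.log (Real.exp 1 + ‖x‖)) * |g x - gi| := by gcongr
      _ = (1 + Real.log (n + 2)) * (|g x - gi| * Real.log (Real.exp 1 + ‖x‖)) := by ring
      _ ≤ _ := by gcongr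
  refine ⟨2 * ((1 + Real.log (n + 2)) * cd), by positivity, fun v x y z hx hy => ?_⟩
  have hx' := key v x z hx
  have hy' := key v y z hy
  have hL := one_le_log_e (norm_nonneg z)
  have := abs_sub_le (g x) gi (g y)
  rw [abs_sub_comm gi] at this
  nlinarith

lemma continuous_of_loc {n : ℕ} {c : ℝ} {g : En n → ℝ} (hg : LocLogHolder c g) :
    Continuous g := by
  obtain ⟨hc, hg⟩ := hg
  rw [continuous_iff_continuousAt]
  intro y
  rw [Metric.continuousAt_iff]
  intro ε hε
  refine ⟨Real.exp (-(c / ε)), Real.exp_pos _, fun {x} hx => ?_⟩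
  by_cases hxy : x = y
  · subst hxy; simpa using hε
  have hpos : 0 < ‖x - y‖ := norm_pos_iff.2 (sub_ne_zero.2 hxy)
  rw [dist_eq_norm] at hx
  have hL := one_le_log_e (t := 1 / ‖x - y‖) (by positivity)
  rw [Real.dist_eq]
  refine (hg x y).trans_lt ?_
  rw [div_lt_iff₀ (by positivity), ← div_lt_iff₀' hε, Real.lt_log_iff_exp_lt (by positivity)]
  have : Real.exp (c / ε) < 1 / ‖x - y‖ := by
    rw [lt_one_div (Real.exp_pos _) hpos, one_div, ← Real.exp_neg]; exact hx
  linarith [Real.exp_pos 1]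

lemma two_pow_comp {n : ℕ} {g : En n → ℝ} {K : ℝ} {v : ℕ} {x y : En n}
    (h : v * |g x - g y| ≤ K) :
    (2 : ℝ) ^ ((v : ℝ) * (g x + n / 2)) ≤ 2 ^ K * (2 : ℝ) ^ ((v : ℝ) * (g y + n / 2)) := by
  rw [← Real.rpow_add (by norm_num)]
  apply Real.rpow_le_rpow_of_exponent_le (by norm_num)
  have := mul_le_mul_of_nonneg_left (le_abs_self (g x - g y)) (Nat.cast_nonneg v : (0 : ℝ) ≤ v)
  nlinarith

/-! ### Medians and the maximal median function -/

lemma layer_cake_ennreal {n : ℕ} {f : En n → ℝ≥0∞} (hf : Measurable f) :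
    ∫⁻ x, f x = ∫⁻ t in Set.Ioi (0 : ℝ), volume {x | ENNReal.ofReal t < f x} := by
  have hS : MeasurableSet {z : En n × ℝ | ENNReal.ofReal z.2 < f z.1} :=
    measurableSet_lt (by fun_prop) (hf.comp measurable_fst)
  have h1 : ∀ x, f x = ∫⁻ t in Set.Ioi (0 : ℝ),
      ({z : En n × ℝ | ENNReal.ofReal z.2 < f z.1}.indicator (fun _ => (1 : ℝ≥0∞))) (x, t) := by
    intro x
    have : ∀ t : ℝ, ({z : En n × ℝ | ENNReal.ofReal z.2 < f z.1}.indicator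
        (fun _ => (1 : ℝ≥0∞))) (x, t)
        = {t : ℝ | ENNReal.ofReal t < f x}.indicator (fun _ => (1 : ℝ≥0∞)) t := by
      intro t; simp [Set.indicator]
    simp_rw [this]
    rw [lintegral_indicator (measurableSet_lt (by fun_prop) measurable_const), lintegral_one,
      Measure.restrict_apply_univ, Measure.restrict_apply
        (measurableSet_lt (by fun_prop) measurable_const)]
    by_cases hx : f x = ∞
    · rw [hx]
      have : {t : ℝ | ENNReal.ofReal t < ∞} ∩ Set.Ioi 0 = Set.Ioi 0 := by
        ext t; simp
      rw [this]; simp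
    · have : {t : ℝ | ENNReal.ofReal t < f x} ∩ Set.Ioi 0 = Set.Ioo 0 (f x).toReal := by
        ext t
        constructor
        · rintro ⟨h, h0⟩
          exact ⟨h0, (ENNReal.ofReal_lt_iff_lt_toReal (le_of_lt h0) hx).1 h⟩
        · rintro ⟨h0, h⟩
          exact ⟨(ENNReal.ofReal_lt_iff_lt_toReal (le_of_lt h0) hx).2 h, h0⟩
      rw [this, Real.volume_Ioo, sub_zero, ENNReal.ofReal_toReal hx]
  calc ∫⁻ x, f x = ∫⁻ x, ∫⁻ t in Set.Ioi (0 : ℝ),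
      ({z : En n × ℝ | ENNReal.ofReal z.2 < f z.1}.indicator (fun _ => (1 : ℝ≥0∞))) (x, t) :=
        lintegral_congr h1
    _ = ∫⁻ t in Set.Ioi (0 : ℝ), ∫⁻ x,
      ({z : En n × ℝ | ENNReal.ofReal z.2 < f z.1}.indicator (fun _ => (1 : ℝ≥0∞))) (x, t) := by
        apply lintegral_lintegral_swap
        exact (measurable_const.indicator hS).aemeasurable
    _ = _ := by
        refine lintegral_congr fun t => ?_
        have : ∀ x : En n, ({z : En n × ℝ | ENNReal.ofReal z.2 < f z.1}.indicator
            (fun _ => (1 : ℝ≥0∞))) (x, t)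
            = {x : En n | ENNReal.ofReal t < f x}.indicator (fun _ => (1 : ℝ≥0∞)) x := by
          intro x; simp [Set.indicator]
        simp_rw [this]
        rw [lintegral_indicator (measurableSet_lt measurable_const hf), lintegral_one,
          Measure.restrict_apply_univ]

lemma exists_median {n : ℕ} {Q : Set (En n)} (h0 : volume Q ≠ 0)
    (hfin : volume Q ≠ ∞) {h : En n → ℝ≥0∞} (hm : Measurable h) (hi : ∫⁻ x, h x ≠ ∞)
    {ε : ℝ} (hε : 0 < ε) (hlow : ∀ x ∈ Q, ENNReal.ofReal ε ≤ h x) :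
    ∃ t : ℝ, 0 < t ∧ volume (Q ∩ {x | ENNReal.ofReal t < h x}) ≤ volume Q / 2 ∧
      volume Q / 2 < volume (Q ∩ {x | ENNReal.ofReal (t / 2) < h x}) := by
  set S : Set ℝ := {t | 0 < t ∧ volume (Q ∩ {x | ENNReal.ofReal t < h x}) ≤ volume Q / 2} with hS
  have hhalf : volume Q / 2 < volume Q := ENNReal.half_lt_self h0 hfin
  have hlb : ∀ t ∈ S, ε ≤ t := by
    rintro t ⟨ht0, ht⟩
    by_contra hlt
    push Not at hlt
    have : Q ∩ {x | ENNReal.ofReal t < h x} = Q := by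
      apply Set.inter_eq_left.2
      intro x hx
      exact lt_of_lt_of_le ((ENNReal.ofReal_lt_ofReal_iff hε).2 hlt) (hlow x hx)
    rw [this] at ht
    exact absurd hhalf (not_lt.2 ht)
  have hne : S.Nonempty := by
    have hv : volume Q / 2 ≠ 0 := by simp [h0]
    have hv' : volume Q / 2 ≠ ∞ := (hhalf.trans_le le_top).ne
    set T : ℝ≥0∞ := (∫⁻ x, h x) / (volume Q / 2) + 1 with hT
    have hTtop : T ≠ ∞ := by
      rw [hT]; exact ENNReal.add_ne_top.2 ⟨ENNReal.div_ne_top hi hv, by simp⟩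
    have hT0 : T ≠ 0 := by rw [hT]; simp
    refine ⟨T.toReal, ENNReal.toReal_pos hT0 hTtop, ?_⟩
    rw [ENNReal.ofReal_toReal hTtop]
    have h1 := mul_meas_ge_le_lintegral (μ := volume) hm T
    calc volume (Q ∩ {x | T < h x}) ≤ volume {x | T ≤ h x} :=
          measure_mono fun x hx => show T ≤ h x from le_of_lt hx.2
      _ ≤ (∫⁻ x, h x) / T := by
          rw [ENNReal.le_div_iff_mul_le (Or.inl hT0) (Or.inl hTtop), mul_comm]; exact h1
      _ ≤ volume Q / 2 := by
          apply ENNReal.div_le_of_le_mul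
          calc ∫⁻ x, h x = volume Q / 2 * ((∫⁻ x, h x) / (volume Q / 2)) :=
                (ENNReal.mul_div_cancel hv hv').symm
            _ ≤ volume Q / 2 * T := by gcongr; rw [hT]; exact le_self_add
  have hbdd : BddBelow S := ⟨ε, hlb⟩
  have hinf : ε ≤ sInf S := le_csInf hne hlb
  have : sInf S < 2 * sInf S := by linarith
  obtain ⟨t, ht, hlt⟩ := exists_lt_of_csInf_lt hne this
  refine ⟨t, ht.1, ht.2, ?_⟩
  by_contra hcon
  have : t / 2 ∈ S := ⟨by linarith [ht.1], not_lt.1 hcon⟩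
  have := csInf_le hbdd this
  linarith

lemma weak_type {n : ℕ} {A : Set (En n)} (hA : MeasurableSet A) :
    volume {x : En n | ∃ v : ℕ, volume (dyadicCube n v (idx n v x)) / 2
      < volume (dyadicCube n v (idx n v x) ∩ A)} ≤ 2 * volume A := by
  set good : ℕ → (Fin n → ℤ) → Prop := fun v m =>
    volume (dyadicCube n v m) / 2 < volume (dyadicCube n v m ∩ A) with hgood
  set D : ℕ → Set (En n) := fun v => {x | good v (idx n v x) ∧ ∀ u < v, ¬ good u (idx n u x)} with hD
  have hcov : {x : En n | ∃ v : ℕ, volume (dyadicCube n v (idx n v x)) / 2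
      < volume (dyadicCube n v (idx n v x) ∩ A)} ⊆ ⋃ v, D v := by
    rintro x hx
    have hx' : ∃ v : ℕ, good v (idx n v x) := hx
    classical
    exact Set.mem_iUnion.2 ⟨Nat.find hx', Nat.find_spec hx', fun u hu => Nat.find_min hx' hu⟩
  have hDeq : ∀ v, D v = ⋃ m ∈ idx n v '' D v, dyadicCube n v m := by
    intro v
    ext x
    simp only [Set.mem_iUnion, exists_prop]
    constructor
    · intro hx
      exact ⟨idx n v x, ⟨x, hx, rfl⟩, mem_cube.2 rfl⟩
    · rintro ⟨m, ⟨y, hy, rfl⟩, hxm⟩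
      have hxy := mem_cube.1 hxm
      refine ⟨?_, fun u hu => ?_⟩
      · rw [hxy]; exact hy.1
      · rw [idx_nested (by exact_mod_cast hu.le) hxy]; exact hy.2 u hu
  have hDm : ∀ v, MeasurableSet (D v) := by
    intro v
    rw [hDeq v]
    exact MeasurableSet.biUnion (Set.to_countable _) fun m _ => measurable_cube _ m
  have hdisj : ∀ v : ℕ, Pairwise (Function.onFun Disjoint fun m => dyadicCube n v m) := by
    intro v m m' hmm
    refine Set.disjoint_left.2 fun x hx hx' => hmm ?_
    rw [← mem_cube.1 hx, mem_cube.1 hx']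
  have hDA : ∀ v, volume (D v) ≤ 2 * volume (D v ∩ A) := by
    intro v
    have e1 : volume (D v) = ∑' m : idx n v '' D v, volume (dyadicCube n v m) := by
      conv_lhs => rw [hDeq v]
      exact measure_biUnion (Set.to_countable _) (fun m _ m' _ h => hdisj v h)
        fun m _ => measurable_cube _ m
    have e2 : volume (D v ∩ A) = ∑' m : idx n v '' D v, volume (dyadicCube n v m ∩ A) := by
      conv_lhs => rw [hDeq v, Set.iUnion₂_inter]
      exact measure_biUnion (Set.to_countable _)
        (fun m _ m' _ h => (hdisj v h).mono Set.inter_subset_left Set.inter_subset_left)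
        fun m _ => (measurable_cube _ m).inter hA
    rw [e1, e2, ← ENNReal.tsum_mul_left]
    refine ENNReal.tsum_le_tsum ?_
    rintro ⟨m, ⟨y, hy, rfl⟩⟩
    have := hy.1
    simp only [hgood] at this
    rw [mul_comm, ← ENNReal.div_le_iff_le_mul (by simp) (by simp)]
    exact this.le
  have hDd : Pairwise (Function.onFun Disjoint D) := by
    intro u v huv
    refine Set.disjoint_left.2 fun x hx hx' => ?_
    rcases lt_or_gt_of_ne huv with h | h
    · exact hx'.2 u h hx.1
    · exact hx.2 v h hx'.1
  calc _ ≤ volume (⋃ v, D v) := measure_mono hcov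
    _ ≤ ∑' v, volume (D v) := measure_iUnion_le _
    _ ≤ ∑' v, 2 * volume (D v ∩ A) := ENNReal.tsum_le_tsum hDA
    _ = 2 * ∑' v, volume (D v ∩ A) := ENNReal.tsum_mul_left
    _ = 2 * volume (⋃ v, D v ∩ A) := by
        rw [measure_iUnion (fun u v h => (hDd h).mono Set.inter_subset_left Set.inter_subset_left)
          fun v => (hDm v).inter hA]
    _ ≤ 2 * volume A := by
        gcongr
        exact Set.iUnion_subset fun v => Set.inter_subset_right

lemma measurable_idx_comp {n : ℕ} (v : ℤ) {β : Type*} [MeasurableSpace β] (f : (Fin n → ℤ) → β) :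
    Measurable fun x : En n => f (idx n v x) :=
  (measurable_of_countable f).comp (measurable_idx n v)

lemma maximal_bound {n : ℕ} {h : En n → ℝ≥0∞} (hm : Measurable h)
    {H : ℕ → (Fin n → ℤ) → ℝ}
    (hH : ∀ (v : ℕ) m, volume (dyadicCube n v m) / 2 <
      volume (dyadicCube n v m ∩ {x | ENNReal.ofReal (H v m / 2) < h x})) :
    ∫⁻ x, ⨆ v : ℕ, ENNReal.ofReal (H v (idx n v x)) ≤ 4 * ∫⁻ x, h x := by
  have hmeas : Measurable fun x : En n => ⨆ v : ℕ, ENNReal.ofReal (H v (idx n v x)) :=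
    Measurable.iSup fun v => measurable_idx_comp _ (fun m => ENNReal.ofReal (H v m))
  rw [layer_cake_ennreal hmeas]
  have h2 : ∫⁻ t in Set.Ioi (0 : ℝ), 2 * volume {x | ENNReal.ofReal t < 2 * h x} = 4 * ∫⁻ x, h x := by
    rw [lintegral_const_mul', ← layer_cake_ennreal (hm.const_mul 2), lintegral_const_mul _ hm,
      ← mul_assoc]
    · norm_num
    · simp
  rw [← h2]
  refine lintegral_mono fun t => ?_
  have e : {x | ENNReal.ofReal t < 2 * h x} = {x | ENNReal.ofReal (t / 2) < h x} := by
    ext x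
    have : ENNReal.ofReal t = 2 * ENNReal.ofReal (t / 2) := by
      rw [← ENNReal.ofReal_ofNat, ← ENNReal.ofReal_mul (by norm_num)]; congr 1; ring
    show ENNReal.ofReal t < 2 * h x ↔ ENNReal.ofReal (t / 2) < h x
    rw [this]
    exact ENNReal.mul_lt_mul_iff_right (by simp) (by simp)
  simp only [e]
  refine le_trans (measure_mono ?_) (weak_type (measurableSet_lt measurable_const hm))
  intro x hx
  have hx' : ENNReal.ofReal t < ⨆ v : ℕ, ENNReal.ofReal (H v (idx n v x)) := hx
  obtain ⟨v, hv⟩ := lt_iSup_iff.1 hx'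
  refine ⟨v, (hH v (idx n v x)).trans_le (measure_mono ?_)⟩
  refine Set.inter_subset_inter_right _ fun y hy =>
    show ENNReal.ofReal (t / 2) < h y from lt_of_le_of_lt ?_ hy
  apply ENNReal.ofReal_le_ofReal
  have : t < H v (idx n v x) := by
    by_contra hc
    exact absurd hv (not_lt.2 (ENNReal.ofReal_le_ofReal (not_lt.1 hc)))
  linarith

lemma exists_H (n : ℕ) : ∃ B : ℝ, 1 ≤ B ∧ ∀ h : En n → ℝ≥0∞, Measurable h → ∫⁻ x, h x ≤ 1 →
    ∃ H : ℕ → (Fin n → ℤ) → ℝ, (∀ (v : ℕ) m, 0 < H v m) ∧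
      (∀ (v : ℕ) m, volume (dyadicCube n v m) / 2 ≤
        volume (dyadicCube n v m ∩ {x | h x ≤ ENNReal.ofReal (H v m)})) ∧
      (∀ (v : ℕ) m, H v m ≤ B * (2 : ℝ) ^ (v * n)) ∧
      (∀ (v : ℕ) m, ∃ z, idx n v z = m ∧ (Real.exp 1 + ‖z‖) ^ (-((n : ℝ) + 1)) ≤ H v m) ∧
      ∫⁻ x, ⨆ v : ℕ, ENNReal.ofReal (H v (idx n v x)) ≤ ENNReal.ofReal B := by
  set w : En n → ℝ≥0∞ := fun x => ENNReal.ofReal ((1 + ‖x‖) ^ (-((n : ℝ) + 1))) with hw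
  have hwm : Measurable w := by rw [hw]; fun_prop
  have hwi : ∫⁻ x, w x < ∞ := finite_integral_one_add_norm (by simp)
  refine ⟨4 * (1 + (∫⁻ x, w x).toReal), by linarith [ENNReal.toReal_nonneg (a := ∫⁻ x, w x)], ?_⟩
  intro h hm hi
  set g : En n → ℝ≥0∞ := fun x => h x + w x with hg
  have hgm : Measurable g := hm.add hwm
  have hgi : ∫⁻ x, g x ≤ ENNReal.ofReal (1 + (∫⁻ x, w x).toReal) := by
    rw [ENNReal.ofReal_add (by norm_num) ENNReal.toReal_nonneg, ENNReal.ofReal_toReal hwi.ne,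
      lintegral_add_left hm, ENNReal.ofReal_one]
    gcongr
  have hex : ∀ (v : ℕ) (m : Fin n → ℤ), ∃ t : ℝ, 0 < t ∧
      volume (dyadicCube n v m ∩ {x | ENNReal.ofReal t < g x}) ≤ volume (dyadicCube n v m) / 2 ∧
      volume (dyadicCube n v m) / 2 <
        volume (dyadicCube n v m ∩ {x | ENNReal.ofReal (t / 2) < g x}) := by
    intro v m
    set R : ℝ := ‖xpt n v m‖ + (n + 1) * (2 : ℝ) ^ (-(v : ℤ)) with hR
    have hR0 : 0 ≤ R := by positivity
    refine exists_median (vol_cube_ne_zero _ _) (vol_cube_ne_top _ _) hgm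
      (hgi.trans_lt ENNReal.ofReal_lt_top).ne (ε := (1 + R) ^ (-((n : ℝ) + 1))) (by positivity) ?_
    intro x hx
    have h1 : ‖x‖ ≤ R := by
      have h2 := norm_sub_le_of_idx ((mem_cube.1 hx).trans (idx_xpt (n := n) v m).symm)
      have h3 := norm_sub_norm_le x (xpt n v m)
      rw [hR]; linarith
    refine le_trans ?_ (le_add_self : w x ≤ h x + w x)
    apply ENNReal.ofReal_le_ofReal
    apply Real.rpow_le_rpow_of_nonpos (by positivity) (by linarith)
    linarith [(Nat.cast_nonneg n : (0 : ℝ) ≤ n)]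
  choose H hH0 hH1 hH2 using hex
  refine ⟨H, hH0, ?_, ?_, ?_, ?_⟩
  · intro v m
    have hfin := vol_cube_ne_top (n := n) v m
    have hsplit := measure_inter_add_sdiff (μ := volume) (dyadicCube n v m)
      (measurableSet_lt (measurable_const (a := ENNReal.ofReal (H v m))) hgm)
    have hsub : dyadicCube n v m \ {x | ENNReal.ofReal (H v m) < g x} ⊆
        dyadicCube n v m ∩ {x | h x ≤ ENNReal.ofReal (H v m)} := by
      rintro x ⟨hx, hx'⟩
      exact ⟨hx, show h x ≤ ENNReal.ofReal (H v m) from le_trans le_self_add (not_lt.1 hx')⟩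
    refine le_trans ?_ (measure_mono hsub)
    have : volume (dyadicCube n v m) / 2 + volume (dyadicCube n v m) / 2 ≤
        volume (dyadicCube n v m) / 2 +
          volume (dyadicCube n v m \ {x | ENNReal.ofReal (H v m) < g x}) := by
      rw [ENNReal.add_halves]
      conv_lhs => rw [← hsplit]
      gcongr
      exact hH1 v m
    refine (ENNReal.add_le_add_iff_left ?_).1 this
    exact (ENNReal.half_lt_self (vol_cube_ne_zero _ _) hfin).ne_top
  · intro v m
    have h1 := mul_meas_ge_le_lintegral (μ := volume) hgm (ENNReal.ofReal (H v m / 2))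
    have h2 : ENNReal.ofReal (H v m / 2) * (volume (dyadicCube n v m) / 2) ≤
        ENNReal.ofReal (1 + (∫⁻ x, w x).toReal) := by
      refine le_trans ?_ (h1.trans hgi)
      gcongr
      refine (hH2 v m).le.trans (measure_mono fun x hx =>
        show ENNReal.ofReal (H v m / 2) ≤ g x from le_of_lt hx.2)
    have h3 : volume (dyadicCube n v m) / 2 = ENNReal.ofReal (((2 : ℝ) ^ (v * n))⁻¹ / 2) := by
      rw [vol_cube, ENNReal.ofReal_div_of_pos (by norm_num), ENNReal.ofReal_ofNat,
        ← ENNReal.ofReal_pow (by positivity), zpow_neg, zpow_natCast, inv_pow, pow_mul]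
    rw [h3, ← ENNReal.ofReal_mul (by linarith [hH0 v m]),
      ENNReal.ofReal_le_ofReal_iff (by linarith [ENNReal.toReal_nonneg (a := ∫⁻ x, w x)])] at h2
    have hp : (0 : ℝ) < 2 ^ (v * n) := by positivity
    have h4 : H v m / 2 * (((2 : ℝ) ^ (v * n))⁻¹ / 2) = H v m / (4 * 2 ^ (v * n)) := by
      field_simp; norm_num
    rw [h4, div_le_iff₀ (by positivity)] at h2
    linarith
  · intro v m
    have h1 : ¬ (dyadicCube n v m ⊆ dyadicCube n v m ∩ {x | ENNReal.ofReal (H v m) < g x}) := by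
      intro hsub
      have := (measure_mono hsub).trans (hH1 v m)
      exact absurd (ENNReal.half_lt_self (vol_cube_ne_zero (n := n) v m) (vol_cube_ne_top _ _))
        (not_lt.2 this)
    obtain ⟨z, hz, hz'⟩ := Set.not_subset.1 h1
    refine ⟨z, mem_cube.1 hz, ?_⟩
    have h2 : ¬ (ENNReal.ofReal (H v m) < g z) := fun hh => hz' ⟨hz, hh⟩
    have h3 : w z ≤ ENNReal.ofReal (H v m) := le_trans le_add_self (not_lt.1 h2)
    rw [hw] at h3
    have h4 := (ENNReal.ofReal_le_ofReal_iff (hH0 v m).le).1 h3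
    refine le_trans ?_ h4
    apply Real.rpow_le_rpow_of_nonpos (by positivity)
    · linarith [Real.one_le_exp (show (0 : ℝ) ≤ 1 by norm_num)]
    · linarith [(Nat.cast_nonneg n : (0 : ℝ) ≤ n)]
  · refine (maximal_bound hgm hH2).trans ?_
    rw [ENNReal.ofReal_mul (by norm_num), ENNReal.ofReal_ofNat]
    gcongr

lemma log_H_bound {n : ℕ} {c : ℝ} {p₀ r : En n → ℝ} (hp : GlobLogHolder c p₀)
    (hr : ∀ x y, |r x - r y| ≤ |p₀ x - p₀ y|) {B : ℝ} (hB : 1 ≤ B) :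
    ∃ K : ℝ, 0 ≤ K ∧ ∀ (v : ℕ) (H : ℝ) (x y z : En n), 0 < H → H ≤ B * (2 : ℝ) ^ (v * n) →
      (Real.exp 1 + ‖z‖) ^ (-((n : ℝ) + 1)) ≤ H → idx n v x = idx n v z → idx n v y = idx n v z →
      H ^ r x ≤ Real.exp K * H ^ r y := by
  obtain ⟨K1, hK1, h1⟩ := loc_bound hp.1
  obtain ⟨K2, hK2, h2⟩ := glob_bound hp
  have hn0 : (0 : ℝ) ≤ n := Nat.cast_nonneg n
  have hlB : 0 ≤ Real.log B := Real.log_nonneg hB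
  have hl2 : 0 < Real.log 2 := Real.log_pos (by norm_num)
  refine ⟨Real.log B * K2 + n * Real.log 2 * K1 + (n + 1) * K2, by positivity, ?_⟩
  intro v H x y z hH hu hl hx hy
  have hL := one_le_log_e (norm_nonneg z)
  have a1 := h1 v x y (hx.trans hy.symm)
  have a2 := h2 v x y z hx hy
  have hd := abs_nonneg (p₀ x - p₀ y)
  have a3 : |p₀ x - p₀ y| ≤ K2 := by nlinarith
  have b1 : Real.log H ≤ Real.log B + v * n * Real.log 2 := by
    have := Real.log_le_log hH hu
    rw [Real.log_mul (by positivity) (by positivity), Real.log_pow] at this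
    push_cast at this; exact this
  have b2 : -((n + 1) * Real.log (Real.exp 1 + ‖z‖)) ≤ Real.log H := by
    have := Real.log_le_log (by positivity) hl
    rw [Real.log_rpow (by positivity)] at this
    linarith
  have key : Real.log H * (r x - r y) ≤
      Real.log B * K2 + n * Real.log 2 * K1 + (n + 1) * K2 := by
    have e1 : |Real.log H| ≤ Real.log B + v * n * Real.log 2 + (n + 1) * Real.log (Real.exp 1 + ‖z‖) := by
      have : (0 : ℝ) ≤ v * n * Real.log 2 := by positivity
      have : (0 : ℝ) ≤ (n + 1) * Real.log (Real.exp 1 + ‖z‖) := by positivity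
      rw [abs_le]; constructor <;> linarith
    calc Real.log H * (r x - r y) ≤ |Real.log H * (r x - r y)| := le_abs_self _
      _ = |Real.log H| * |r x - r y| := abs_mul _ _
      _ ≤ (Real.log B + v * n * Real.log 2 + (n + 1) * Real.log (Real.exp 1 + ‖z‖)) *
          |p₀ x - p₀ y| := by
          exact mul_le_mul e1 (hr x y) (abs_nonneg _) ((abs_nonneg _).trans e1)
      _ = Real.log B * |p₀ x - p₀ y| + n * Real.log 2 * (v * |p₀ x - p₀ y|) +
          (n + 1) * (Real.log (Real.exp 1 + ‖z‖) * |p₀ x - p₀ y|) := by ring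
      _ ≤ _ := by gcongr
  rw [Real.rpow_def_of_pos hH, Real.rpow_def_of_pos hH, ← Real.exp_add]
  apply Real.exp_le_exp.2
  linarith

/-! ### The two norm estimates -/

lemma seqNormInf_le {n : ℕ} {α : En n → ℝ} {q : ℝ} (hq : 0 < q)
    {lam : ℕ → (Fin n → ℤ) → ℂ} (c : ℕ → (Fin n → ℤ) → ℝ≥0∞)
    (E : ℕ → (Fin n → ℤ) → Set (En n)) (hEm : ∀ v m, MeasurableSet (E v m))
    (hEQ : ∀ (v : ℕ) m, E v m ⊆ dyadicCube n v m)
    (hEv : ∀ (v : ℕ) m, volume (dyadicCube n v m) / 2 ≤ volume (E v m)) {D : ℝ≥0∞}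
    (hD : ∀ x, ∑' v : ℕ, ∑' m, c v m * (E v m).indicator (fun _ => (1 : ℝ≥0∞)) x ≤ D)
    (hc : ∀ (v : ℕ) x, ENNReal.ofReal ((2 : ℝ) ^ ((v : ℝ) * (α x + n / 2) * q) *
      ‖lam v (idx n v x)‖ ^ q) ≤ c v (idx n v x)) :
    seqNormInf α q lam ≤ (2 * D) ^ (1 / q) := by
  unfold seqNormInf
  refine iSup₂_le fun vP mP => ?_
  set P := dyadicCube n vP mP with hP
  have hPm : MeasurableSet P := measurable_cube _ _
  have hmain : (∑' v : ℕ, if vP ≤ (v : ℤ) then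
          ∫⁻ x in P,
            ∑' m : Fin n → ℤ,
              ENNReal.ofReal ((2 : ℝ) ^ ((v : ℝ) * (α x + n / 2) * q) * ‖lam v m‖ ^ q) *
                (dyadicCube n (v : ℤ) m).indicator (fun _ => (1 : ℝ≥0∞)) x
        else 0) ≤ 2 * D * volume P := by
    have hterm : ∀ v : ℕ, (if vP ≤ (v : ℤ) then
          ∫⁻ x in P,
            ∑' m : Fin n → ℤ,
              ENNReal.ofReal ((2 : ℝ) ^ ((v : ℝ) * (α x + n / 2) * q) * ‖lam v m‖ ^ q) *
                (dyadicCube n (v : ℤ) m).indicator (fun _ => (1 : ℝ≥0∞)) x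
        else 0) ≤ 2 * ∫⁻ x in P, ∑' m, c v m * (E v m).indicator (fun _ => (1 : ℝ≥0∞)) x := by
      intro v
      split_ifs with hv
      swap
      · exact zero_le
      have e1 : ∫⁻ x in P,
            ∑' m : Fin n → ℤ,
              ENNReal.ofReal ((2 : ℝ) ^ ((v : ℝ) * (α x + n / 2) * q) * ‖lam v m‖ ^ q) *
                (dyadicCube n (v : ℤ) m).indicator (fun _ => (1 : ℝ≥0∞)) x
          ≤ ∫⁻ x in P, ∑' m, c v m * (dyadicCube n v m).indicator (fun _ => (1 : ℝ≥0∞)) x := by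
        refine lintegral_mono fun x => ?_
        simp only
        rw [tsum_ind (v : ℤ) (fun m => ENNReal.ofReal ((2 : ℝ) ^ ((v : ℝ) * (α x + n / 2) * q) *
          ‖lam v m‖ ^ q)), tsum_ind]
        exact hc v x
      refine e1.trans ?_
      have e2 : ∀ (G : (Fin n → ℤ) → Set (En n)), (∀ m, MeasurableSet (G m)) →
          ∫⁻ x in P, ∑' m, c v m * (G m).indicator (fun _ => (1 : ℝ≥0∞)) x
            = ∑' m, c v m * volume (G m ∩ P) := by
        intro G hG
        rw [lintegral_tsum fun m => ((measurable_const.indicator (hG m)).const_mul _).aemeasurable]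
        refine tsum_congr fun m => ?_
        rw [lintegral_const_mul _ (measurable_const.indicator (hG m)),
          lintegral_indicator (hG m), lintegral_one, Measure.restrict_apply_univ,
          Measure.restrict_apply (hG m)]
      rw [e2 _ (fun m => measurable_cube _ m), e2 _ (hEm v), ← ENNReal.tsum_mul_left]
      refine ENNReal.tsum_le_tsum fun m => ?_
      rw [mul_left_comm]
      gcongr
      by_cases hne : (dyadicCube n v m ∩ P).Nonempty
      · obtain ⟨x, hx, hxP⟩ := hne
        have hsub : dyadicCube n v m ⊆ P := by
          intro y hy
          rw [hP, mem_cube] at hxP ⊢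
          rw [← hxP]
          exact idx_nested hv ((mem_cube.1 hy).trans (mem_cube.1 hx).symm)
        rw [Set.inter_eq_left.2 hsub, Set.inter_eq_left.2 ((hEQ v m).trans hsub), mul_comm,
          ← ENNReal.div_le_iff_le_mul (by simp) (by simp)]
        exact hEv v m
      · rw [Set.not_nonempty_iff_eq_empty.1 hne]; simp
    refine (ENNReal.tsum_le_tsum hterm).trans ?_
    rw [ENNReal.tsum_mul_left, ← lintegral_tsum, mul_assoc]
    · gcongr
      refine (lintegral_mono hD).trans ?_
      simp
    · intro v
      refine (Measurable.tsum fun m => ?_).aemeasurable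
      exact (measurable_const.indicator (hEm v m)).const_mul _
  have hP0 : volume P ≠ 0 := vol_cube_ne_zero _ _
  have hPt : volume P ≠ ∞ := vol_cube_ne_top _ _
  calc volume P ^ (-(1 / q)) * _ ≤ volume P ^ (-(1 / q)) * (2 * D * volume P) ^ (1 / q) := by
        gcongr
    _ = (2 * D) ^ (1 / q) := by
        rw [ENNReal.mul_rpow_of_nonneg _ _ (by positivity), mul_left_comm, ← ENNReal.rpow_add _ _ hP0 hPt]
        simp

lemma rpow_mul_rpow_le_add {a b : ℝ≥0∞} {s t : ℝ} (hs : 0 ≤ s) (ht : 0 ≤ t) (h : s + t = 1) :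
    a ^ s * b ^ t ≤ a + b := by
  calc a ^ s * b ^ t ≤ (a + b) ^ s * (a + b) ^ t := by
        gcongr
        · exact le_self_add
        · exact le_add_self
    _ = a + b := by rw [← ENNReal.rpow_add_of_nonneg _ _ hs ht, h, ENNReal.rpow_one]

lemma seqNorm_le {n : ℕ} {α p₀ p r : En n → ℝ} {q₀ q s t γ C₁ B : ℝ} (hq₀ : 0 < q₀) (hq : 0 < q)
    (hp₀ : ∀ x, 1 ≤ p₀ x) (hs : 0 ≤ s) (ht : 0 ≤ t) (hst : s + t = 1)
    (h1 : ∀ x, p x / q * s = p₀ x / q₀) (h2 : ∀ x, r x * γ * p₀ x = t)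
    (hC₁ : 0 < C₁) (hB : 0 ≤ B)
    {lam : ℕ → (Fin n → ℤ) → ℂ} {β : ℕ → En n → ℝ≥0∞} {Hs : En n → ℝ≥0∞}
    (hm : Measurable fun x => ((∑' v, β v x ^ q) ^ (1 / q)) ^ p x)
    (hβ : ∫⁻ x, ((∑' v, β v x ^ q) ^ (1 / q)) ^ p x ≤ 1)
    (hH : ∫⁻ x, Hs x ≤ ENNReal.ofReal B)
    (hle : ∀ (v : ℕ) x, ENNReal.ofReal ((2 : ℝ) ^ ((v : ℝ) * (α x + n / 2)) * ‖lam v (idx n v x)‖)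
      ≤ ENNReal.ofReal C₁ * β v x ^ (q / q₀) * Hs x ^ (r x * γ)) :
    seqNorm α p₀ (fun _ => q₀) lam ≤ ENNReal.ofReal (C₁ * (1 + B)) := by
  unfold seqNorm mixedNorm luxNorm
  refine sInf_le ⟨ENNReal.ofReal_pos.2 (by positivity), ?_⟩
  have hBB : ENNReal.ofReal (1 + B) ≠ 0 := by
    rw [Ne, ENNReal.ofReal_eq_zero, not_le]; positivity
  have hC0 : ENNReal.ofReal C₁ ≠ 0 := by
    rw [Ne, ENNReal.ofReal_eq_zero, not_le]; positivity
  have hpt : ∀ x, ((∑' v : ℕ, (∑' m : Fin n → ℤ,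
      ENNReal.ofReal ((2 : ℝ) ^ ((v : ℝ) * (α x + n / 2)) * ‖lam v m‖) *
        (dyadicCube n (v : ℤ) m).indicator (fun _ => (1 : ℝ≥0∞)) x) ^ q₀) ^ (1 / q₀)
        / ENNReal.ofReal (C₁ * (1 + B))) ^ p₀ x
      ≤ (ENNReal.ofReal (1 + B))⁻¹ * (((∑' v, β v x ^ q) ^ (1 / q)) ^ p x + Hs x) := by
    intro x
    have hp0 : 0 ≤ p₀ x := zero_le_one.trans (hp₀ x)
    have hsum : (∑' v : ℕ, (∑' m : Fin n → ℤ,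
      ENNReal.ofReal ((2 : ℝ) ^ ((v : ℝ) * (α x + n / 2)) * ‖lam v m‖) *
        (dyadicCube n (v : ℤ) m).indicator (fun _ => (1 : ℝ≥0∞)) x) ^ q₀) ^ (1 / q₀)
        ≤ ENNReal.ofReal C₁ * (∑' v, β v x ^ q) ^ (1 / q₀) * Hs x ^ (r x * γ) := by
      have : ∀ v : ℕ, (∑' m : Fin n → ℤ,
          ENNReal.ofReal ((2 : ℝ) ^ ((v : ℝ) * (α x + n / 2)) * ‖lam v m‖) *
          (dyadicCube n (v : ℤ) m).indicator (fun _ => (1 : ℝ≥0∞)) x) ^ q₀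
          ≤ ENNReal.ofReal C₁ ^ q₀ * β v x ^ q * (Hs x ^ (r x * γ)) ^ q₀ := by
        intro v
        rw [tsum_ind (v : ℤ) (fun m => ENNReal.ofReal ((2 : ℝ) ^ ((v : ℝ) * (α x + n / 2)) *
          ‖lam v m‖))]
        refine (ENNReal.rpow_le_rpow (hle v x) hq₀.le).trans_eq ?_
        rw [ENNReal.mul_rpow_of_nonneg _ _ hq₀.le, ENNReal.mul_rpow_of_nonneg _ _ hq₀.le,
          ← ENNReal.rpow_mul (β v x), div_mul_cancel₀ _ hq₀.ne']
      refine (ENNReal.rpow_le_rpow (ENNReal.tsum_le_tsum this) (by positivity)).trans_eq ?_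
      rw [ENNReal.tsum_mul_right, ENNReal.tsum_mul_left,
        ENNReal.mul_rpow_of_nonneg _ _ (by positivity),
        ENNReal.mul_rpow_of_nonneg _ _ (by positivity), ← ENNReal.rpow_mul, ← ENNReal.rpow_mul _ q₀,
        mul_one_div_cancel hq₀.ne', ENNReal.rpow_one, ENNReal.rpow_one]
    set S := ∑' v, β v x ^ q with hS
    calc _ ≤ (ENNReal.ofReal C₁ * S ^ (1 / q₀) * Hs x ^ (r x * γ)
          / ENNReal.ofReal (C₁ * (1 + B))) ^ p₀ x := by gcongr
      _ = ((ENNReal.ofReal (1 + B))⁻¹ * (S ^ (1 / q₀) * Hs x ^ (r x * γ))) ^ p₀ x := by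
          congr 1
          rw [ENNReal.ofReal_mul hC₁.le, div_eq_mul_inv, ENNReal.mul_inv (Or.inl hC0) (Or.inl ENNReal.ofReal_ne_top)]
          calc _ = (ENNReal.ofReal C₁ * (ENNReal.ofReal C₁)⁻¹) * ((ENNReal.ofReal (1 + B))⁻¹ *
                (S ^ (1 / q₀) * Hs x ^ (r x * γ))) := by ring
            _ = _ := by rw [ENNReal.mul_inv_cancel hC0 ENNReal.ofReal_ne_top, one_mul]
      _ = (ENNReal.ofReal (1 + B))⁻¹ ^ p₀ x * (((S ^ (1 / q)) ^ p x) ^ s * Hs x ^ t) := by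
          rw [ENNReal.mul_rpow_of_nonneg _ _ hp0, ENNReal.mul_rpow_of_nonneg _ _ hp0,
            ← ENNReal.rpow_mul, ← ENNReal.rpow_mul, ← ENNReal.rpow_mul, ← ENNReal.rpow_mul, h2]
          have e : 1 / q₀ * p₀ x = 1 / q * (p x * s) := by
            rw [one_div_mul_eq_div, ← h1 x]; ring
          rw [e]
      _ ≤ (ENNReal.ofReal (1 + B))⁻¹ * ((S ^ (1 / q)) ^ p x + Hs x) := by
          gcongr
          · calc _ ≤ (ENNReal.ofReal (1 + B))⁻¹ ^ (1 : ℝ) := by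
                  apply ENNReal.rpow_le_rpow_of_exponent_ge _ (hp₀ x)
                  rw [ENNReal.inv_le_one, ENNReal.one_le_ofReal]; linarith
              _ = _ := ENNReal.rpow_one _
          · exact rpow_mul_rpow_le_add hs ht hst
  refine (lintegral_mono hpt).trans ?_
  rw [lintegral_const_mul' _ _ (ENNReal.inv_ne_top.2 hBB), lintegral_add_left hm]
  calc _ ≤ (ENNReal.ofReal (1 + B))⁻¹ * (1 + ENNReal.ofReal B) := by gcongr
    _ = (ENNReal.ofReal (1 + B))⁻¹ * ENNReal.ofReal (1 + B) := by
        rw [ENNReal.ofReal_add (by norm_num) hB, ENNReal.ofReal_one]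
    _ ≤ 1 := (ENNReal.inv_mul_cancel hBB ENNReal.ofReal_ne_top).le

lemma factor_eq {θ q₀ q₁ q γ a M e₀ e₁ e : ℝ} (h1 : 0 ≤ a) (h2 : 0 < M)
    (hθ0 : 0 < θ) (hθ' : 0 < 1 - θ)
    (hq0 : 0 ≤ q / q₀) (hq1 : 0 ≤ q / q₁) (hst : q / q₀ * (1 - θ) + q / q₁ * θ = 1)
    (hγ : γ * (1 - θ) + -(q / q₁) * θ = 0) (he : e = (1 - θ) * e₀ + θ * e₁) :
    (2 * (2 : ℝ) ^ (-e₀) * a ^ (q / q₀) * M ^ γ) ^ (1 - θ) *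
      (2 * (2 : ℝ) ^ (-e₁) * a ^ (q / q₁) * M ^ (-(q / q₁))) ^ θ
    = 2 * ((2 : ℝ) ^ e)⁻¹ * a := by
  have g1 : (2 : ℝ) ^ (1 - θ) * 2 ^ θ = 2 := by
    rw [← Real.rpow_add (by norm_num)]; simp
  have g2 : (2 : ℝ) ^ (-e₀ * (1 - θ)) * 2 ^ (-e₁ * θ) = ((2 : ℝ) ^ e)⁻¹ := by
    rw [← Real.rpow_add (by norm_num), ← Real.rpow_neg (by norm_num), he]
    congr 1; ring
  have g3 : a ^ (q / q₀ * (1 - θ)) * a ^ (q / q₁ * θ) = a := by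
    rw [← Real.rpow_add_of_nonneg h1 (mul_nonneg hq0 hθ'.le) (mul_nonneg hq1 hθ0.le), hst,
      Real.rpow_one]
  have g4 : M ^ (γ * (1 - θ)) * M ^ (-(q / q₁) * θ) = 1 := by
    rw [← Real.rpow_add h2, hγ, Real.rpow_zero]
  have f : ∀ c d w x : ℝ, (2 * (2 : ℝ) ^ c * a ^ d * M ^ w) ^ x =
      2 ^ x * 2 ^ (c * x) * a ^ (d * x) * M ^ (w * x) := by
    intro c d w x
    rw [Real.mul_rpow (by positivity) (by positivity), Real.mul_rpow (by positivity) (by positivity),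
      Real.mul_rpow (by positivity) (by positivity), ← Real.rpow_mul (by norm_num),
      ← Real.rpow_mul h1, ← Real.rpow_mul h2.le]
  rw [f, f]
  calc _ = ((2 : ℝ) ^ (1 - θ) * 2 ^ θ) * ((2 : ℝ) ^ (-e₀ * (1 - θ)) * 2 ^ (-e₁ * θ)) *
      (a ^ (q / q₀ * (1 - θ)) * a ^ (q / q₁ * θ)) *
      (M ^ (γ * (1 - θ)) * M ^ (-(q / q₁) * θ)) := by ring
    _ = _ := by rw [g1, g2, g3, g4, mul_one]
/-- Step 2 of Theorem `calderon-prod2`: factorization of an arbitrary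
element of `f^{α(·)}_{p(·),q}` through `f^{α₀(·)}_{p₀(·),q₀}` and `f^{α₁(·)}_{∞,q₁}`. -/
theorem stmt13 {n : ℕ} (θ : ℝ) (hθ : θ ∈ Set.Ioo (0 : ℝ) 1)
    (q₀ q₁ q : ℝ) (hq₀ : 1 ≤ q₀) (hq₁ : 1 ≤ q₁)
    (p₀ α₀ α₁ p α : En n → ℝ)
    (hp₀ : ∃ c, GlobLogHolder c p₀)
    (hp₀b : ∃ b : ℝ, ∀ x, 1 ≤ p₀ x ∧ p₀ x ≤ b)
    (hα₀ : ∃ c, LocLogHolder c α₀) (hα₁ : ∃ c, LocLogHolder c α₁)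
    (hp : ∀ x, 1 / p x = (1 - θ) / p₀ x)
    (hq : 1 / q = (1 - θ) / q₀ + θ / q₁)
    (hα : ∀ x, α x = (1 - θ) * α₀ x + θ * α₁ x) :
    ∃ C : ℝ, 0 < C ∧ ∀ lam : ℕ → (Fin n → ℤ) → ℂ,
      seqNorm α p (fun _ => q) lam ≠ 0 → seqNorm α p (fun _ => q) lam ≠ ∞ →
      ∃ lam0 lam1 : ℕ → (Fin n → ℤ) → ℝ,
        (∀ (j : ℕ) (m : Fin n → ℤ), 0 ≤ lam0 j m) ∧
        (∀ (j : ℕ) (m : Fin n → ℤ), 0 ≤ lam1 j m) ∧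
        (∀ (j : ℕ) (m : Fin n → ℤ),
          ENNReal.ofReal ‖lam j m‖ ≤
            seqNorm α p (fun _ => q) lam *
              (ENNReal.ofReal (lam0 j m) ^ (1 - θ) * ENNReal.ofReal (lam1 j m) ^ θ)) ∧
        seqNorm α₀ p₀ (fun _ => q₀) (fun j m => (lam0 j m : ℂ)) ≤ ENNReal.ofReal C ∧
        seqNormInf α₁ q₁ (fun j m => (lam1 j m : ℂ)) ≤ ENNReal.ofReal C := by
  obtain ⟨hθ0, hθ1⟩ := hθ
  have hθ' : 0 < 1 - θ := by linarith
  have hq₀' : 0 < q₀ := by linarith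
  have hq₁' : 0 < q₁ := by linarith
  have hqpos : 0 < q := by
    rw [← one_div_pos, hq]; positivity
  obtain ⟨cp, hp₀⟩ := hp₀
  obtain ⟨b, hp₀b⟩ := hp₀b
  obtain ⟨c0, hα₀⟩ := hα₀
  obtain ⟨c1, hα₁⟩ := hα₁
  have hp₀1 : ∀ x, 1 ≤ p₀ x := fun x => (hp₀b x).1
  have hp₀pos : ∀ x, 0 < p₀ x := fun x => zero_lt_one.trans_le (hp₀1 x)
  have hpeq : ∀ x, p x = p₀ x / (1 - θ) := by
    intro x
    rw [← one_div_one_div (p x), hp x, one_div_div]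
  have hppos : ∀ x, 0 < p x := by
    intro x; rw [hpeq]; exact div_pos (hp₀pos x) hθ'
  set r : En n → ℝ := fun x => (1 - θ) / p₀ x with hr
  have hpr : ∀ x, p x * r x = 1 := by
    intro x
    have := (hp₀pos x).ne'
    rw [hpeq, hr]; field_simp
  have hrpos : ∀ x, 0 < r x := fun x => div_pos hθ' (hp₀pos x)
  have hrl : ∀ x y, |r x - r y| ≤ |p₀ x - p₀ y| := by
    intro x y
    have hx := hp₀pos x
    have hy := hp₀pos y
    have e : r x - r y = (1 - θ) / (p₀ x * p₀ y) * (p₀ y - p₀ x) := by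
      simp only [hr]; field_simp
    rw [e, abs_mul, abs_of_pos (by positivity), abs_sub_comm]
    refine mul_le_of_le_one_left (abs_nonneg _) ?_
    rw [div_le_one (by positivity)]
    nlinarith [hp₀1 x, hp₀1 y]
  obtain ⟨B, hB, hBH⟩ := exists_H n
  obtain ⟨K, hK, hKH⟩ := log_H_bound hp₀ hrl hB
  obtain ⟨K0, hK0, hL0⟩ := loc_bound hα₀
  obtain ⟨K1, hK1, hL1⟩ := loc_bound hα₁
  have hLa : ∀ (v : ℕ) (x y : En n), idx n v x = idx n v y → v * |α x - α y| ≤ K0 + K1 := by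
    intro v x y h
    have a0 := hL0 v x y h
    have a1 := hL1 v x y h
    have : |α x - α y| ≤ |α₀ x - α₀ y| + |α₁ x - α₁ y| := by
      have e : α x - α y = (1 - θ) * (α₀ x - α₀ y) + θ * (α₁ x - α₁ y) := by
        rw [hα, hα]; ring
      rw [e]
      refine (abs_add_le _ _).trans ?_
      rw [abs_mul, abs_mul, abs_of_pos hθ', abs_of_pos hθ0]
      nlinarith [abs_nonneg (α₀ x - α₀ y), abs_nonneg (α₁ x - α₁ y)]
    have hv : (0 : ℝ) ≤ v := Nat.cast_nonneg v
    nlinarith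
  have hp₀c : Continuous p₀ := continuous_of_loc hp₀.1
  have hαc : Continuous α := by
    have : α = fun x => (1 - θ) * α₀ x + θ * α₁ x := funext hα
    rw [this]
    have := continuous_of_loc hα₀
    have := continuous_of_loc hα₁
    fun_prop
  have hpc : Continuous p := by
    have : p = fun x => p₀ x / (1 - θ) := funext hpeq
    rw [this]; fun_prop
  set s : ℝ := (1 - θ) * q / q₀ with hs
  set t : ℝ := θ * q / q₁ with ht
  have hst : s + t = 1 := by
    have : s + t = q * (1 / q) := by rw [hq, hs, ht]; ring
    rw [this, mul_one_div_cancel hqpos.ne']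
  have hs0 : 0 ≤ s := by positivity
  have ht0 : 0 ≤ t := by positivity
  set γ : ℝ := t / (1 - θ) with hγ
  have hγ0 : 0 ≤ γ := by positivity
  set Ka : ℝ := 2 ^ (K0 + K1) with hKa
  have hKa0 : 0 < Ka := by positivity
  set C₁ : ℝ := 2 * 2 ^ K0 * Ka ^ (q / q₀) * Real.exp K ^ γ with hC₁
  have hC₁0 : 0 < C₁ := by positivity
  set A : ℝ := (2 * 2 ^ K1) ^ q₁ with hA
  have hA0 : 0 < A := by positivity
  set D : ℝ := A * Ka ^ q * Real.exp K ^ q with hD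
  have hD0 : 0 < D := by positivity
  refine ⟨max (C₁ * (1 + B)) ((2 * D) ^ (1 / q₁)), lt_max_of_lt_left (by positivity), ?_⟩
  intro lam hN0 hNtop
  set N := seqNorm α p (fun _ => q) lam with hN
  set R : ℝ := 2 * N.toReal with hR
  have hNr : 0 < N.toReal := ENNReal.toReal_pos hN0 hNtop
  have hR0 : 0 < R := by positivity
  have hR2 : ENNReal.ofReal R = 2 * N := by
    rw [hR, ENNReal.ofReal_mul (by norm_num), ENNReal.ofReal_ofNat, ENNReal.ofReal_toReal hNtop]
  -- the normalized pieces
  set β : ℕ → En n → ℝ := fun v x =>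
    (2 : ℝ) ^ ((v : ℝ) * (α x + n / 2)) * ‖lam v (idx n v x)‖ / R with hβ
  have hβ0 : ∀ v x, 0 ≤ β v x := fun v x => by simp only [hβ]; positivity
  set S : En n → ℝ≥0∞ := fun x => ∑' v : ℕ, ENNReal.ofReal (β v x) ^ q with hS
  set h : En n → ℝ≥0∞ := fun x => (S x ^ (1 / q)) ^ p x with hh
  have hβm : ∀ v, Measurable (β v) := by
    intro v
    simp only [hβ]
    refine Measurable.div_const (Measurable.mul ?_ (measurable_idx_comp _ fun m => ‖lam v m‖)) R
    have := hαc.measurable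
    fun_prop
  have hhm : Measurable h := by
    have : Measurable S := Measurable.tsum fun v => by
      have := hβm v
      fun_prop
    have := hpc.measurable
    fun_prop
  have hh1 : ∫⁻ x, h x ≤ 1 := by
    have hlt : N < 2 * N := by
      rw [two_mul]; exact ENNReal.lt_add_right hNtop hN0
    have hlt' := hlt
    rw [hN] at hlt'
    conv_lhs at hlt' => unfold seqNorm mixedNorm luxNorm
    obtain ⟨c, ⟨hc0, hc⟩, hcN⟩ := sInf_lt_iff.1 hlt'
    refine le_trans (lintegral_mono fun x => ?_) hc
    simp only [hh]
    refine ENNReal.rpow_le_rpow ?_ (hppos x).le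
    have e : S x ^ (1 / q) = (∑' v : ℕ, (∑' m : Fin n → ℤ,
        ENNReal.ofReal ((2 : ℝ) ^ ((v : ℝ) * (α x + n / 2)) * ‖lam v m‖) *
        (dyadicCube n (v : ℤ) m).indicator (fun _ => (1 : ℝ≥0∞)) x) ^ q) ^ (1 / q) / (2 * N) := by
      have e1 : S x = (∑' v : ℕ, (∑' m : Fin n → ℤ,
        ENNReal.ofReal ((2 : ℝ) ^ ((v : ℝ) * (α x + n / 2)) * ‖lam v m‖) *
        (dyadicCube n (v : ℤ) m).indicator (fun _ => (1 : ℝ≥0∞)) x) ^ q) / (2 * N) ^ q := by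
        rw [div_eq_mul_inv, ← ENNReal.tsum_mul_right]
        refine tsum_congr fun v => ?_
        rw [tsum_ind (v : ℤ) (fun m => ENNReal.ofReal ((2 : ℝ) ^ ((v : ℝ) * (α x + n / 2)) *
          ‖lam v m‖)), ← div_eq_mul_inv, ← ENNReal.div_rpow_of_nonneg _ _ hqpos.le, ← hR2,
          ← ENNReal.ofReal_div_of_pos hR0]
      rw [e1, ENNReal.div_rpow_of_nonneg _ _ (by positivity), ← ENNReal.rpow_mul (2 * N),
        mul_one_div_cancel hqpos.ne', ENNReal.rpow_one]
    rw [e]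
    exact ENNReal.div_le_div_left hcN.le _
  obtain ⟨H, hH0, hHE, hHu, hHl, hHs⟩ := hBH h hhm hh1
  have hHcomp : ∀ (v : ℕ) (x y : En n), idx n v x = idx n v y →
      H v (idx n v x) ^ r x ≤ Real.exp K * H v (idx n v x) ^ r y := by
    intro v x y hxy
    obtain ⟨z, hz, hz'⟩ := hHl v (idx n v x)
    exact hKH v _ x y z (hH0 _ _) (hHu _ _) hz' hz.symm (hxy.symm.trans hz.symm)
  -- the factors
  set a : ℕ → (Fin n → ℤ) → ℝ := fun v m =>
    (2 : ℝ) ^ ((v : ℝ) * (α (xpt n v m) + n / 2)) * ‖lam v m‖ / R with ha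
  have ha0 : ∀ v m, 0 ≤ a v m := fun v m => by simp only [ha]; positivity
  set M : ℕ → (Fin n → ℤ) → ℝ := fun v m => H v m ^ r (xpt n v m) with hM
  have hM0 : ∀ v m, 0 < M v m := fun v m => Real.rpow_pos_of_pos (hH0 v m) _
  have haβ : ∀ (v : ℕ) x, a v (idx n v x) ≤ Ka * β v x := by
    intro v x
    have := two_pow_comp (hLa v (xpt n v (idx n v x)) x (idx_xpt (v : ℤ) (idx n v x)))
    simp only [ha, hβ]
    rw [← mul_div_assoc, ← mul_assoc]
    gcongr
  have hMx : ∀ (v : ℕ) x, M v (idx n v x) ≤ Real.exp K * H v (idx n v x) ^ r x := by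
    intro v x
    have := hHcomp v (xpt n v (idx n v x)) x (idx_xpt (v : ℤ) (idx n v x))
    rw [idx_xpt] at this
    exact this
  have hxM : ∀ (v : ℕ) x, H v (idx n v x) ^ r x ≤ Real.exp K * M v (idx n v x) := by
    intro v x
    exact hHcomp v x (xpt n v (idx n v x)) (idx_xpt (v : ℤ) (idx n v x)).symm
  refine ⟨fun v m => 2 * (2 : ℝ) ^ (-((v : ℝ) * (α₀ (xpt n v m) + n / 2))) *
      a v m ^ (q / q₀) * M v m ^ γ,
    fun v m => 2 * (2 : ℝ) ^ (-((v : ℝ) * (α₁ (xpt n v m) + n / 2))) *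
      a v m ^ (q / q₁) * M v m ^ (-(q / q₁)), ?_, ?_, ?_, ?_, ?_⟩
  · intro v m
    have := ha0 v m
    have := hM0 v m
    positivity
  · intro v m
    have := ha0 v m
    have := hM0 v m
    positivity
  · intro v m
    have h1 := ha0 v m
    have h2 := hM0 v m
    have hNe : N = ENNReal.ofReal N.toReal := (ENNReal.ofReal_toReal hNtop).symm
    rw [hNe, ENNReal.ofReal_rpow_of_nonneg (by positivity) hθ'.le,
      ENNReal.ofReal_rpow_of_nonneg (by positivity) hθ0.le, ← ENNReal.ofReal_mul (by positivity),
      ← ENNReal.ofReal_mul (by positivity)]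
    apply ENNReal.ofReal_le_ofReal
    apply le_of_eq
    have e1 : q / q₀ * (1 - θ) + q / q₁ * θ = 1 := by
      have : q / q₀ * (1 - θ) + q / q₁ * θ = s + t := by rw [hs, ht]; ring
      rw [this, hst]
    have e2 : γ * (1 - θ) + -(q / q₁) * θ = 0 := by
      have : γ * (1 - θ) = t := by rw [hγ, div_mul_cancel₀ _ hθ'.ne']
      rw [this, ht]; ring
    rw [factor_eq (e := (v : ℝ) * (α (xpt n v m) + n / 2)) h1 h2 hθ0 hθ' (by positivity)
      (by positivity) e1 e2 (by rw [hα]; ring)]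
    simp only [ha, hR]
    have : (0 : ℝ) < (2 : ℝ) ^ ((v : ℝ) * (α (xpt n v m) + n / 2)) := by positivity
    field_simp
  · refine le_trans (seqNorm_le (C₁ := C₁) (B := B) (s := s) (t := t) (γ := γ) (p := p) (r := r)
      (q := q) hq₀' hqpos hp₀1 hs0 ht0 hst ?_ ?_ hC₁0 (by linarith)
      (β := fun v x => ENNReal.ofReal (β v x))
      (Hs := fun x => ⨆ v : ℕ, ENNReal.ofReal (H v (idx n v x))) hhm hh1 hHs ?_)
      (ENNReal.ofReal_le_ofReal (le_max_left _ _))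
    · intro x
      rw [hpeq, hs]; field_simp
    · intro x
      have := (hp₀pos x).ne'
      simp only [hr, hγ]; field_simp
    · intro v x
      have h1 := ha0 v (idx n v x)
      have h2 := hM0 v (idx n v x)
      have h3 := hβ0 v x
      have h4 := hH0 v (idx n v x)
      have hcmp := two_pow_comp (hL0 v x (xpt n v (idx n v x)) (idx_xpt (v : ℤ) (idx n v x)).symm)
      rw [Complex.norm_real, Real.norm_of_nonneg (by positivity)]
      have hreal : (2 : ℝ) ^ ((v : ℝ) * (α₀ x + n / 2)) *
          (2 * (2 : ℝ) ^ (-((v : ℝ) * (α₀ (xpt n v (idx n v x)) + n / 2))) *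
            a v (idx n v x) ^ (q / q₀) * M v (idx n v x) ^ γ) ≤
          C₁ * β v x ^ (q / q₀) * H v (idx n v x) ^ (r x * γ) := by
        set y := xpt n v (idx n v x) with hy
        have e1 : (2 : ℝ) ^ ((v : ℝ) * (α₀ x + n / 2)) *
            (2 : ℝ) ^ (-((v : ℝ) * (α₀ y + n / 2))) ≤ 2 ^ K0 := by
          rw [Real.rpow_neg (by norm_num), ← div_eq_mul_inv, div_le_iff₀ (by positivity)]
          exact hcmp
        have e2 : a v (idx n v x) ^ (q / q₀) ≤ Ka ^ (q / q₀) * β v x ^ (q / q₀) := by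
          rw [← Real.mul_rpow hKa0.le h3]
          exact Real.rpow_le_rpow h1 (haβ v x) (by positivity)
        have e3 : M v (idx n v x) ^ γ ≤ Real.exp K ^ γ * H v (idx n v x) ^ (r x * γ) := by
          rw [Real.rpow_mul h4.le, ← Real.mul_rpow (by positivity) (by positivity)]
          exact Real.rpow_le_rpow h2.le (hMx v x) hγ0
        calc _ = 2 * ((2 : ℝ) ^ ((v : ℝ) * (α₀ x + n / 2)) *
            (2 : ℝ) ^ (-((v : ℝ) * (α₀ y + n / 2)))) * a v (idx n v x) ^ (q / q₀) *
              M v (idx n v x) ^ γ := by ring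
          _ ≤ 2 * 2 ^ K0 * (Ka ^ (q / q₀) * β v x ^ (q / q₀)) *
              (Real.exp K ^ γ * H v (idx n v x) ^ (r x * γ)) := by gcongr
          _ = _ := by rw [hC₁]; ring
      refine (ENNReal.ofReal_le_ofReal hreal).trans ?_
      rw [ENNReal.ofReal_mul (by positivity), ENNReal.ofReal_mul (by positivity),
        ENNReal.ofReal_rpow_of_nonneg h3 (by positivity),
        ← ENNReal.ofReal_rpow_of_nonneg h4.le (mul_nonneg (hrpos x).le hγ0)]
      gcongr
      · exact mul_nonneg (hrpos x).le hγ0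
      · exact le_iSup (fun v : ℕ => ENNReal.ofReal (H v (idx n v x))) v
  · refine le_trans (seqNormInf_le hq₁'
      (fun v m => ENNReal.ofReal (A * a v m ^ q * M v m ^ (-q)))
      (fun v m => dyadicCube n v m ∩ {x | h x ≤ ENNReal.ofReal (H v m)})
      (fun v m => (measurable_cube _ _).inter (measurableSet_le hhm measurable_const))
      (fun v m => Set.inter_subset_left) hHE (D := ENNReal.ofReal D) ?_ ?_) ?_
    · intro x
      have hterm : ∀ v : ℕ, ∑' m, ENNReal.ofReal (A * a v m ^ q * M v m ^ (-q)) *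
          (dyadicCube n v m ∩ {x | h x ≤ ENNReal.ofReal (H v m)}).indicator
            (fun _ => (1 : ℝ≥0∞)) x ≤
          ENNReal.ofReal D * (ENNReal.ofReal (β v x) ^ q * (S x)⁻¹) := by
        intro v
        rw [tsum_eq_single (idx n v x)]
        swap
        · intro m hm
          rw [Set.indicator_of_notMem, mul_zero]
          intro hx
          exact hm (mem_cube.1 hx.1).symm
        have h1 := ha0 v (idx n v x)
        have h2 := hM0 v (idx n v x)
        have h3 := hβ0 v x
        have h4 := hH0 v (idx n v x)
        by_cases hx : h x ≤ ENNReal.ofReal (H v (idx n v x))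
        swap
        · rw [Set.indicator_of_notMem, mul_zero]
          · exact zero_le
          · exact fun hx' => hx hx'.2
        have hSx : S x ≤ ENNReal.ofReal ((Real.exp K * M v (idx n v x)) ^ q) := by
          have e1 : S x ^ (1 / q) = h x ^ r x := by
            simp only [hh]
            rw [← ENNReal.rpow_mul _ (p x), hpr, ENNReal.rpow_one]
          have e2 : S x = (h x ^ r x) ^ q := by
            rw [← e1, ← ENNReal.rpow_mul, one_div_mul_cancel hqpos.ne', ENNReal.rpow_one]
          rw [e2, ← ENNReal.ofReal_rpow_of_nonneg (by positivity) hqpos.le]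
          refine ENNReal.rpow_le_rpow ?_ hqpos.le
          refine (ENNReal.rpow_le_rpow hx (hrpos x).le).trans ?_
          rw [ENNReal.ofReal_rpow_of_nonneg h4.le (hrpos x).le]
          exact ENNReal.ofReal_le_ofReal (hxM v x)
        have hinv := ENNReal.inv_le_inv.2 hSx
        rw [← ENNReal.ofReal_inv_of_pos (by positivity)] at hinv
        refine (mul_le_of_le_one_right' (Set.indicator_le_self' (fun _ _ => zero_le) x)).trans ?_
        calc ENNReal.ofReal (A * a v (idx n v x) ^ q * M v (idx n v x) ^ (-q))
            ≤ ENNReal.ofReal (D * (β v x ^ q * ((Real.exp K * M v (idx n v x)) ^ q)⁻¹)) := by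
              apply ENNReal.ofReal_le_ofReal
              have e2 : a v (idx n v x) ^ q ≤ Ka ^ q * β v x ^ q := by
                rw [← Real.mul_rpow hKa0.le h3]
                exact Real.rpow_le_rpow h1 (haβ v x) hqpos.le
              calc _ ≤ A * (Ka ^ q * β v x ^ q) * M v (idx n v x) ^ (-q) := by gcongr
                _ = _ := by
                  rw [hD, Real.mul_rpow (by positivity) h2.le, Real.rpow_neg h2.le]
                  have : (0 : ℝ) < Real.exp K ^ q := by positivity
                  have : (0 : ℝ) < M v (idx n v x) ^ q := by positivity
                  field_simp
          _ = ENNReal.ofReal D * (ENNReal.ofReal (β v x) ^ q *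
                ENNReal.ofReal (((Real.exp K * M v (idx n v x)) ^ q)⁻¹)) := by
              rw [ENNReal.ofReal_mul (p := D) hD0.le, ENNReal.ofReal_mul (p := β v x ^ q) (by positivity),
                ENNReal.ofReal_rpow_of_nonneg h3 hqpos.le]
          _ ≤ _ := by gcongr
      refine (ENNReal.tsum_le_tsum hterm).trans ?_
      rw [ENNReal.tsum_mul_left, ENNReal.tsum_mul_right]
      exact mul_le_of_le_one_right' (ENNReal.mul_inv_le_one (S x))
    · intro v x
      have h1 := ha0 v (idx n v x)
      have h2 := hM0 v (idx n v x)
      have hcmp := two_pow_comp (hL1 v x (xpt n v (idx n v x)) (idx_xpt (v : ℤ) (idx n v x)).symm)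
      apply ENNReal.ofReal_le_ofReal
      rw [Complex.norm_real, Real.norm_of_nonneg (by positivity), Real.rpow_mul (by norm_num),
        ← Real.mul_rpow (by positivity) (by positivity)]
      set y := xpt n v (idx n v x) with hy
      have e1 : (2 : ℝ) ^ ((v : ℝ) * (α₁ x + n / 2)) *
          (2 : ℝ) ^ (-((v : ℝ) * (α₁ y + n / 2))) ≤ 2 ^ K1 := by
        rw [Real.rpow_neg (by norm_num), ← div_eq_mul_inv, div_le_iff₀ (by positivity)]
        exact hcmp
      calc _ = (2 * ((2 : ℝ) ^ ((v : ℝ) * (α₁ x + n / 2)) *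
            (2 : ℝ) ^ (-((v : ℝ) * (α₁ y + n / 2)))) * a v (idx n v x) ^ (q / q₁) *
              M v (idx n v x) ^ (-(q / q₁))) ^ q₁ := by congr 1; ring
        _ ≤ (2 * 2 ^ K1 * a v (idx n v x) ^ (q / q₁) * M v (idx n v x) ^ (-(q / q₁))) ^ q₁ := by
            gcongr
        _ = _ := by
            rw [Real.mul_rpow (by positivity) (by positivity),
              Real.mul_rpow (by positivity) (by positivity), ← Real.rpow_mul h1,
              ← Real.rpow_mul h2.le, div_mul_cancel₀ _ hq₁'.ne', neg_mul,
              div_mul_cancel₀ _ hq₁'.ne']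
    · have : (2 : ℝ≥0∞) * ENNReal.ofReal D = ENNReal.ofReal (2 * D) := by
        rw [ENNReal.ofReal_mul (p := (2 : ℝ)) (by norm_num), ENNReal.ofReal_ofNat]
      rw [this, ENNReal.ofReal_rpow_of_nonneg (by positivity) (by positivity)]
      exact ENNReal.ofReal_le_ofReal (le_max_right _ _)
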